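/- arXiv:1307.0193 — 6 statements merged into one kernel-verified Lean document; each statement's English description precedes it below -/
import Mathlib

section
/- Let 𝒮 be a GUS sample of R = Π_{i ∈ ι} R_i with parameters a > 0 and b : Finset ι → ℝ, and let f : R → ℝ. For S ⊆ ι define y_S = Σ_{u ∈ Π_{i ∈ S} R_i} ( Σ_{v ∈ Π_{i ∈ ι∖S} R_i} f(u ⊎ v) )², where u ⊎ v denotes the tuple in R whose i-th coordinate is u_i for i ∈ S and v_i for i ∉ S, and define c_S = Σ_{T ⊆ S} (−1)^{|S|−|T|} b(T). Then the estimator X = (1/a) · Σ_{t ∈ 𝒮} f(t) satisfies Var(X) = Σ_{S ⊆ ι} (c_S / a²) · y_S − y_∅. -/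
open MeasureTheory ProbabilityTheory Finset

/-- Combine a tuple `u` indexed by `S` with a tuple `v` indexed by `Sᶜ` into a full tuple. -/
def mergeTuple {ι : Type*} [Fintype ι] [DecidableEq ι] {R : ι → Type*}
    (S : Finset ι) (u : ∀ i : {x // x ∈ S}, R i.1) (v : ∀ i : {x // x ∈ Sᶜ}, R i.1) :
    ∀ i, R i :=
  fun i => if h : i ∈ S then u ⟨i, h⟩ else v ⟨i, Finset.mem_compl.mpr h⟩

lemma gus_moebius {ι : Type*} [Fintype ι] [DecidableEq ι] (b : Finset ι → ℝ) (U : Finset ι) :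
    ∑ S ∈ U.powerset, ∑ T ∈ S.powerset, (-1 : ℝ) ^ (S.card - T.card) * b T = b U := by
  have h1 : ∑ S ∈ U.powerset, ∑ T ∈ S.powerset, (-1 : ℝ) ^ (S.card - T.card) * b T
      = ∑ T ∈ U.powerset, ∑ S ∈ Finset.Icc T U, (-1 : ℝ) ^ (S.card - T.card) * b T := by
    apply Finset.sum_comm'
    intro S T
    simp only [Finset.mem_powerset, Finset.mem_Icc, Finset.le_eq_subset]
    constructor
    · rintro ⟨h, h'⟩
      exact ⟨⟨h', h⟩, h'.trans h⟩
    · rintro ⟨⟨h, h'⟩, _⟩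
      exact ⟨h', h⟩
  rw [h1]
  have h2 : ∀ T ∈ U.powerset, ∑ S ∈ Finset.Icc T U, (-1 : ℝ) ^ (S.card - T.card) * b T
      = if T = U then b T else 0 := by
    intro T hT
    rw [Finset.mem_powerset] at hT
    rw [← Finset.sum_mul, Finset.Icc_eq_image_powerset hT, Finset.sum_image]
    · have h3 : ∑ W ∈ (U \ T).powerset, (-1 : ℝ) ^ ((T ∪ W).card - T.card)
          = ∑ W ∈ (U \ T).powerset, (-1 : ℝ) ^ W.card := by
        apply Finset.sum_congr rfl
        intro W hW
        rw [Finset.mem_powerset, Finset.subset_sdiff] at hW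
        rw [Finset.card_union_of_disjoint hW.2.symm, Nat.add_sub_cancel_left]
      have h4 := congrArg (fun z : ℤ => (z : ℝ))
        (Finset.sum_powerset_neg_one_pow_card (x := U \ T))
      push_cast at h4
      rw [h3, h4]
      have h5 : (U \ T = ∅) ↔ T = U := by
        rw [Finset.sdiff_eq_empty_iff_subset]
        exact ⟨fun h => hT.antisymm h, fun h => h ▸ subset_rfl⟩
      by_cases h : T = U <;> simp [h5, h]
    · intro A hA B hB hAB
      simp only [Finset.coe_powerset, Set.mem_preimage, Set.mem_powerset_iff,
        Finset.coe_subset, Finset.subset_sdiff] at hA hB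
      have h6 : (T ∪ A) \ T = (T ∪ B) \ T := by
        simpa using congrArg (fun Z => Z \ T) hAB
      rwa [Finset.union_sdiff_cancel_left hA.2.symm,
        Finset.union_sdiff_cancel_left hB.2.symm] at h6
  rw [Finset.sum_congr rfl h2]
  simp

lemma gus_y {ι : Type*} [Fintype ι] [DecidableEq ι]
    {R : ι → Type*} [∀ i, Fintype (R i)] [∀ i, DecidableEq (R i)]
    (f : (∀ i, R i) → ℝ) (S : Finset ι) :
    (∑ u : ∀ i : {x // x ∈ S}, R i.1,
            (∑ v : ∀ i : {x // x ∈ Sᶜ}, R i.1, f (mergeTuple S u v)) ^ 2)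
    = ∑ t, ∑ t', if S ⊆ (Finset.univ.filter fun i => t i = t' i) then f t * f t' else 0 := by
  have h1 : ∀ u : ∀ i : {x // x ∈ S}, R i.1,
      (∑ v : ∀ i : {x // x ∈ Sᶜ}, R i.1, f (mergeTuple S u v))
      = ∑ t : ∀ i, R i, if (fun i : {x // x ∈ S} => t i.1) = u then f t else 0 := by
    intro u
    rw [← Finset.sum_filter]
    refine Finset.sum_bij' (fun v _ => mergeTuple S u v)
      (fun t _ => fun i => t i.1) ?_ ?_ ?_ ?_ ?_
    · intro v _
      simp only [Finset.mem_filter, Finset.mem_univ, true_and]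
      funext i
      simp [mergeTuple]
    · simp
    · intro v _
      funext i
      have := Finset.mem_compl.mp i.2
      simp [mergeTuple, this]
    · intro t ht
      simp only [Finset.mem_filter, Finset.mem_univ, true_and] at ht
      subst ht
      funext i
      simp [mergeTuple]
    · simp
  simp_rw [h1, sq, Finset.sum_mul_sum]
  rw [Finset.sum_comm]
  refine Finset.sum_congr rfl fun t _ => ?_
  rw [Finset.sum_comm]
  refine Finset.sum_congr rfl fun t' _ => ?_
  have h2 : (S ⊆ (Finset.univ.filter fun i => t i = t' i)) ↔
      (fun i : {x // x ∈ S} => t' i.1) = (fun i : {x // x ∈ S} => t i.1) := by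
    constructor
    · intro h
      funext i
      have := h i.2
      simp at this
      exact this.symm
    · intro h i hi
      have := congrFun h ⟨i, hi⟩
      simpa using this.symm
  simp only [h2, ite_mul, zero_mul, Finset.sum_ite_eq, Finset.mem_univ, if_true]
  simp

/-- The variance of the GUS estimator `X = (1/a) ∑_{t ∈ 𝒮} f t` is
`∑_{S ⊆ ι} (c_S / a²) y_S − y_∅`, where `y_S` groups the data by the coordinates in `S`
and `c_S = ∑_{T ⊆ S} (−1)^{|S|−|T|} b T`. -/
theorem gus_variance
    {ι : Type*} [Fintype ι] [DecidableEq ι]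
    {R : ι → Type*} [∀ i, Fintype (R i)] [∀ i, Nonempty (R i)] [∀ i, DecidableEq (R i)]
    {Ω : Type*} [MeasurableSpace Ω] (μ : Measure Ω) [IsProbabilityMeasure μ]
    (𝒮 : Ω → Finset (∀ i, R i)) (hmeas : ∀ t, MeasurableSet {ω | t ∈ 𝒮 ω})
    (a : ℝ) (ha : 0 < a) (b : Finset ι → ℝ)
    (hA : ∀ t, (μ {ω | t ∈ 𝒮 ω}).toReal = a)
    (hB : ∀ t t', (μ {ω | t ∈ 𝒮 ω ∧ t' ∈ 𝒮 ω}).toReal =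
      b (Finset.univ.filter fun i => t i = t' i))
    (f : (∀ i, R i) → ℝ) :
    variance (fun ω => (1 / a) * ∑ t ∈ 𝒮 ω, f t) μ =
      (∑ S : Finset ι,
        ((∑ T ∈ S.powerset, (-1 : ℝ) ^ (S.card - T.card) * b T) / a ^ 2) *
          (∑ u : ∀ i : {x // x ∈ S}, R i.1,
            (∑ v : ∀ i : {x // x ∈ Sᶜ}, R i.1, f (mergeTuple S u v)) ^ 2))
      - (∑ u : ∀ i : {x // x ∈ (∅ : Finset ι)}, R i.1,
          (∑ v : ∀ i : {x // x ∈ (∅ : Finset ι)ᶜ}, R i.1, f (mergeTuple ∅ u v)) ^ 2) := by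
  classical
  set X : (∀ i, R i) → Ω → ℝ := fun t => Set.indicator {ω | t ∈ 𝒮 ω} (fun _ => f t) with hX
  have hsum : ∀ ω, ∑ t ∈ 𝒮 ω, f t = ∑ t, X t ω := by
    intro ω
    simp [hX, Set.indicator_apply]
  have hint : ∀ t, Integrable (X t) μ := fun t =>
    (integrable_const (f t)).indicator (hmeas t)
  have hXX : ∀ t t', (fun ω => X t ω * X t' ω)
      = Set.indicator {ω | t ∈ 𝒮 ω ∧ t' ∈ 𝒮 ω} (fun _ => f t * f t') := by
    intro t t'
    funext ω
    by_cases h1 : t ∈ 𝒮 ω <;> by_cases h2 : t' ∈ 𝒮 ω <;> simp [hX, h1, h2]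
  have hmeas2 : ∀ t t', MeasurableSet {ω | t ∈ 𝒮 ω ∧ t' ∈ 𝒮 ω} :=
    fun t t' => (hmeas t).inter (hmeas t')
  have hint2 : ∀ t t', Integrable (fun ω => X t ω * X t' ω) μ := fun t t' => by
    rw [hXX]
    exact (integrable_const _).indicator (hmeas2 t t')
  have hE1 : ∀ t, ∫ ω, X t ω ∂μ = a * f t := by
    intro t
    rw [hX, integral_indicator_const _ (hmeas t), smul_eq_mul, measureReal_def, hA]
  have hE2 : ∀ t t', ∫ ω, X t ω * X t' ω ∂μ
      = b (Finset.univ.filter fun i => t i = t' i) * (f t * f t') := by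
    intro t t'
    rw [hXX, integral_indicator_const _ (hmeas2 t t'), smul_eq_mul, measureReal_def, hB]
  have hmem : ∀ t, MemLp (X t) 2 μ := fun t =>
    (memLp_const (f t)).indicator (hmeas t)
  have hmemS : MemLp (fun ω => ∑ t, X t ω) 2 μ := memLp_finset_sum _ fun t _ => hmem t
  have hvar : variance (fun ω => ∑ t, X t ω) μ
      = ∑ t, ∑ t', b (Finset.univ.filter fun i => t i = t' i) * (f t * f t')
        - (a * ∑ t, f t) ^ 2 := by
    rw [variance_eq_sub hmemS]
    congr 1
    · simp only [Pi.pow_apply, sq, Finset.sum_mul_sum]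
      rw [integral_finset_sum _ fun t _ => integrable_finset_sum _ fun t' _ => hint2 t t']
      refine Finset.sum_congr rfl fun t _ => ?_
      rw [integral_finset_sum _ fun t' _ => hint2 t t']
      exact Finset.sum_congr rfl fun t' _ => hE2 t t'
    · rw [integral_finset_sum _ fun t _ => hint t]
      simp_rw [hE1, Finset.mul_sum]
  simp_rw [hsum]
  rw [variance_const_mul, hvar]
  simp_rw [gus_y]
  have hy0 : (∑ t : ∀ i, R i, ∑ t' : ∀ i, R i,
      if (∅ : Finset ι) ⊆ (Finset.univ.filter fun i => t i = t' i) then f t * f t' else 0)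
      = (∑ t, f t) ^ 2 := by
    simp [sq, Finset.sum_mul_sum]
  rw [hy0]
  have hmain : (∑ S : Finset ι,
        ((∑ T ∈ S.powerset, (-1 : ℝ) ^ (S.card - T.card) * b T) / a ^ 2) *
          (∑ t : ∀ i, R i, ∑ t' : ∀ i, R i,
            if S ⊆ (Finset.univ.filter fun i => t i = t' i) then f t * f t' else 0))
      = (1 / a) ^ 2 *
        ∑ t, ∑ t', b (Finset.univ.filter fun i => t i = t' i) * (f t * f t') := by
    simp_rw [Finset.mul_sum]
    rw [Finset.sum_comm]
    refine Finset.sum_congr rfl fun t _ => ?_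
    rw [Finset.sum_comm]
    refine Finset.sum_congr rfl fun t' _ => ?_
    rw [← gus_moebius b (Finset.univ.filter fun i => t i = t' i)]
    simp_rw [mul_ite, mul_zero]
    rw [← Finset.sum_filter, Finset.sum_mul, Finset.mul_sum]
    refine Finset.sum_congr ?_ fun S _ => ?_
    · ext S
      simp
    · ring
  rw [hmain, mul_sub]
  congr 1
  field_simp
end

section
/- Let 𝒮 be a random subset of a finite type R on a probability space (Ω₁, ℙ₁) and let 𝒯 be a random subset of R on a probability space (Ω₂, ℙ₂). Then the following are equivalent: (i) for every f : R → ℝ, E[A_f(𝒮)] = E[A_f(𝒯)] and Var[A_f(𝒮)] = Var[A_f(𝒯)]; (ii) ℙ₁[t ∈ 𝒮] = ℙ₂[t ∈ 𝒯] for every t ∈ R, and ℙ₁[t ∈ 𝒮 and t' ∈ 𝒮] = ℙ₂[t ∈ 𝒯 and t' ∈ 𝒯] for all t, t' ∈ R. -/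
open MeasureTheory ProbabilityTheory Finset

section Helpers

variable {R Ω : Type*} [Fintype R] [MeasurableSpace Ω]

lemma soa_sum_eq [DecidableEq R] (A : Finset R) (f : R → ℝ) :
    ∑ t ∈ A, f t = ∑ t, f t * (if t ∈ A then 1 else 0) := by
  simp [Finset.sum_ite_mem]

lemma soa_ind_integrable (μ : Measure Ω) [IsProbabilityMeasure μ] (p : Ω → Prop) [DecidablePred p]
    (hp : MeasurableSet {ω | p ω}) (c : ℝ) :
    Integrable (fun ω => c * (if p ω then (1 : ℝ) else 0)) μ := by
  apply Integrable.const_mul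
  have h : (fun ω => if p ω then (1 : ℝ) else 0) = Set.indicator {ω | p ω} (fun _ => 1) := by
    ext ω; simp [Set.indicator_apply]
  rw [h]
  exact (integrable_const 1).indicator hp

lemma soa_ind_integral (μ : Measure Ω) (p : Ω → Prop) [DecidablePred p]
    (hp : MeasurableSet {ω | p ω}) (c : ℝ) :
    ∫ ω, c * (if p ω then (1 : ℝ) else 0) ∂μ = c * μ.real {ω | p ω} := by
  rw [integral_const_mul]
  have h : (fun ω => if p ω then (1 : ℝ) else 0) = Set.indicator {ω | p ω} 1 := by
    ext ω; simp [Set.indicator_apply]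
  rw [h, integral_indicator_one hp]

lemma soa_mean (μ : Measure Ω) [IsProbabilityMeasure μ] (S : Ω → Finset R)
    (hS : ∀ t : R, MeasurableSet {ω | t ∈ S ω}) (f : R → ℝ) :
    ∫ ω, (∑ t ∈ S ω, f t) ∂μ = ∑ t, f t * μ.real {ω | t ∈ S ω} := by
  classical
  rw [integral_congr_ae (ae_of_all _ fun ω => soa_sum_eq (S ω) f)]
  rw [integral_finsetSum _ (fun t _ => soa_ind_integrable μ _ (hS t) (f t))]
  exact Finset.sum_congr rfl fun t _ => soa_ind_integral μ _ (hS t) (f t)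

lemma soa_second (μ : Measure Ω) [IsProbabilityMeasure μ] (S : Ω → Finset R)
    (hS : ∀ t : R, MeasurableSet {ω | t ∈ S ω}) (f : R → ℝ) :
    ∫ ω, (∑ t ∈ S ω, f t) ^ 2 ∂μ
      = ∑ t, ∑ u, f t * f u * μ.real {ω | t ∈ S ω ∧ u ∈ S ω} := by
  classical
  have h : ∀ ω, (∑ t ∈ S ω, f t) ^ 2
      = ∑ t, ∑ u, (f t * f u) * (if t ∈ S ω ∧ u ∈ S ω then (1 : ℝ) else 0) := by
    intro ω
    rw [soa_sum_eq, sq, Finset.sum_mul_sum]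
    refine Finset.sum_congr rfl fun t _ => Finset.sum_congr rfl fun u _ => ?_
    by_cases h1 : t ∈ S ω <;> by_cases h2 : u ∈ S ω <;> simp [h1, h2]
  have hm : ∀ t u : R, MeasurableSet {ω | t ∈ S ω ∧ u ∈ S ω} :=
    fun t u => (hS t).inter (hS u)
  simp_rw [h]
  rw [integral_finsetSum _ (fun t _ => integrable_finsetSum _
    (fun u _ => soa_ind_integrable μ _ (hm t u) (f t * f u)))]
  refine Finset.sum_congr rfl fun t _ => ?_
  rw [integral_finsetSum _ (fun u _ => soa_ind_integrable μ _ (hm t u) (f t * f u))]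
  exact Finset.sum_congr rfl fun u _ => soa_ind_integral μ _ (hm t u) _

lemma soa_variance (μ : Measure Ω) [IsProbabilityMeasure μ] (S : Ω → Finset R)
    (hS : ∀ t : R, MeasurableSet {ω | t ∈ S ω}) (f : R → ℝ) :
    variance (fun ω => ∑ t ∈ S ω, f t) μ
      = ∑ t, ∑ u, f t * f u * μ.real {ω | t ∈ S ω ∧ u ∈ S ω}
        - (∑ t, f t * μ.real {ω | t ∈ S ω}) ^ 2 := by
  classical
  have hint : Integrable (fun ω => ∑ t ∈ S ω, f t) μ := by
    rw [funext fun ω => soa_sum_eq (S ω) f]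
    exact integrable_finsetSum _ (fun t _ => soa_ind_integrable μ _ (hS t) (f t))
  have hL : MemLp (fun ω => ∑ t ∈ S ω, f t) 2 μ := by
    refine MemLp.of_bound hint.aestronglyMeasurable (∑ t, |f t|) (ae_of_all _ fun ω => ?_)
    rw [Real.norm_eq_abs]
    exact (Finset.abs_sum_le_sum_abs _ _).trans
      (Finset.sum_le_sum_of_subset_of_nonneg (Finset.subset_univ _) fun _ _ _ => abs_nonneg _)
  rw [variance_eq_sub hL, soa_mean μ S hS f, ← soa_second μ S hS f]
  rfl

lemma soa_quad [DecidableEq R] (P : R → R → ℝ) (hP : ∀ a b, P a b = P b a) (t u : R) :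
    ∑ a, ∑ b, (Pi.single t (1 : ℝ) + Pi.single u 1 : R → ℝ) a
      * (Pi.single t (1 : ℝ) + Pi.single u 1 : R → ℝ) b * P a b
      = P t t + 2 * P t u + P u u := by
  simp [add_mul, mul_add, Finset.sum_add_distrib, Pi.single_apply]
  rw [hP u t]; ring

end Helpers

/-- SOA-equivalence of two random subsets (agreement of expectation and
variance of every SUM-aggregate) is equivalent to agreement of all first- and
second-order inclusion probabilities. -/
theorem soa_equiv_iff_inclusion_probs
    {R : Type*} [Fintype R] {Ω₁ Ω₂ : Type*} [MeasurableSpace Ω₁] [MeasurableSpace Ω₂]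
    (μ₁ : Measure Ω₁) [IsProbabilityMeasure μ₁]
    (μ₂ : Measure Ω₂) [IsProbabilityMeasure μ₂]
    (𝒮 : Ω₁ → Finset R) (𝒯 : Ω₂ → Finset R)
    (h𝒮 : ∀ t : R, MeasurableSet {ω | t ∈ 𝒮 ω})
    (h𝒯 : ∀ t : R, MeasurableSet {ω | t ∈ 𝒯 ω}) :
    (∀ f : R → ℝ,
        (∫ ω, (∑ t ∈ 𝒮 ω, f t) ∂μ₁ = ∫ ω, (∑ t ∈ 𝒯 ω, f t) ∂μ₂) ∧
        variance (fun ω => ∑ t ∈ 𝒮 ω, f t) μ₁ = variance (fun ω => ∑ t ∈ 𝒯 ω, f t) μ₂)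
    ↔
    ((∀ t : R, μ₁ {ω | t ∈ 𝒮 ω} = μ₂ {ω | t ∈ 𝒯 ω}) ∧
      (∀ t t' : R, μ₁ {ω | t ∈ 𝒮 ω ∧ t' ∈ 𝒮 ω} = μ₂ {ω | t ∈ 𝒯 ω ∧ t' ∈ 𝒯 ω})) := by
  classical
  simp_rw [soa_variance μ₁ 𝒮 h𝒮, soa_variance μ₂ 𝒯 h𝒯, soa_mean μ₁ 𝒮 h𝒮, soa_mean μ₂ 𝒯 h𝒯]
  constructor
  · intro h
    have h1 : ∀ t : R, μ₁.real {ω | t ∈ 𝒮 ω} = μ₂.real {ω | t ∈ 𝒯 ω} := by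
      intro t
      simpa [Pi.single_apply] using (h (Pi.single t 1)).1
    refine ⟨fun t => (measureReal_eq_measureReal_iff).1 (h1 t), fun t u => ?_⟩
    refine (measureReal_eq_measureReal_iff).1 ?_
    have h2 := (h (Pi.single t 1 + Pi.single u 1)).2
    rw [(h (Pi.single t 1 + Pi.single u 1)).1, sub_left_inj,
      soa_quad (fun a b => μ₁.real {ω | a ∈ 𝒮 ω ∧ b ∈ 𝒮 ω}) (fun a b => by simp only [and_comm]),
      soa_quad (fun a b => μ₂.real {ω | a ∈ 𝒯 ω ∧ b ∈ 𝒯 ω}) (fun a b => by simp only [and_comm])]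
      at h2
    simp only [and_self] at h2
    linarith [h1 t, h1 u]
  · rintro ⟨h1, h2⟩ f
    simp only [measureReal_def, h1, h2, and_self]
end

section
/- Let 𝒮₁ and 𝒮₂ be GUS samples of the same finite product R = Π_{i ∈ ι} R_i with parameters (a₁, b¹) and (a₂, b²), defined on a common probability space and independent of each other. Then the union 𝒮₁ ∪ 𝒮₂ is a GUS sample of R with parameters a = a₁ + a₂ − a₁a₂ and b(T) = 2a − 1 + (1 − 2a₁ + b¹(T)) · (1 − 2a₂ + b²(T)) for every T ⊆ ι. -/
open MeasureTheory Finset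

/-- GUS Union. The union of two independent GUS samples of the same product
relation, with parameters `(a₁, b₁)` and `(a₂, b₂)`, is a GUS sample with
`a = a₁ + a₂ − a₁a₂` and `b T = 2a − 1 + (1 − 2a₁ + b₁ T)(1 − 2a₂ + b₂ T)`. -/
theorem gus_union
    {ι : Type*} [Fintype ι] [DecidableEq ι]
    {R : ι → Type*} [∀ i, Fintype (R i)] [∀ i, Nonempty (R i)] [∀ i, DecidableEq (R i)]
    {Ω : Type*} [MeasurableSpace Ω] (μ : Measure Ω) [IsProbabilityMeasure μ]
    (𝒮₁ 𝒮₂ : Ω → Finset (∀ i, R i))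
    (hmeas₁ : ∀ t, MeasurableSet {ω | t ∈ 𝒮₁ ω})
    (hmeas₂ : ∀ t, MeasurableSet {ω | t ∈ 𝒮₂ ω})
    (a₁ a₂ : ℝ) (b₁ b₂ : Finset ι → ℝ)
    (hA₁ : ∀ t, (μ {ω | t ∈ 𝒮₁ ω}).toReal = a₁)
    (hB₁ : ∀ t t', (μ {ω | t ∈ 𝒮₁ ω ∧ t' ∈ 𝒮₁ ω}).toReal =
      b₁ (Finset.univ.filter fun i => t i = t' i))
    (hA₂ : ∀ t, (μ {ω | t ∈ 𝒮₂ ω}).toReal = a₂)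
    (hB₂ : ∀ t t', (μ {ω | t ∈ 𝒮₂ ω ∧ t' ∈ 𝒮₂ ω}).toReal =
      b₂ (Finset.univ.filter fun i => t i = t' i))
    (hindep : ∀ (E F : Set (Finset (∀ i, R i))),
      μ (𝒮₁ ⁻¹' E ∩ 𝒮₂ ⁻¹' F) = μ (𝒮₁ ⁻¹' E) * μ (𝒮₂ ⁻¹' F)) :
    (∀ t, (μ {ω | t ∈ 𝒮₁ ω ∪ 𝒮₂ ω}).toReal = a₁ + a₂ - a₁ * a₂) ∧
    (∀ t t', (μ {ω | t ∈ 𝒮₁ ω ∪ 𝒮₂ ω ∧ t' ∈ 𝒮₁ ω ∪ 𝒮₂ ω}).toReal =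
      2 * (a₁ + a₂ - a₁ * a₂) - 1 +
        (1 - 2 * a₁ + b₁ (Finset.univ.filter fun i => t i = t' i)) *
          (1 - 2 * a₂ + b₂ (Finset.univ.filter fun i => t i = t' i))) := by
  have key : ∀ A B : Set Ω, MeasurableSet B →
      μ.real (A ∪ B) = μ.real A + μ.real B - μ.real (A ∩ B) := by
    intro A B hB
    have h := measureReal_union_add_inter (μ := μ) (s := A) (t := B) hB
    linarith
  have ind : ∀ (E F : Set (Finset (∀ i, R i))),
      μ.real (𝒮₁ ⁻¹' E ∩ 𝒮₂ ⁻¹' F) = μ.real (𝒮₁ ⁻¹' E) * μ.real (𝒮₂ ⁻¹' F) := by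
    intro E F
    simp only [measureReal_def, hindep, ENNReal.toReal_mul]
  have one : ∀ t, μ.real ({ω | t ∈ 𝒮₁ ω} ∪ {ω | t ∈ 𝒮₂ ω}) = a₁ + a₂ - a₁ * a₂ := by
    intro t
    have h2 : μ.real ({ω | t ∈ 𝒮₁ ω} ∩ {ω | t ∈ 𝒮₂ ω})
        = μ.real {ω | t ∈ 𝒮₁ ω} * μ.real {ω | t ∈ 𝒮₂ ω} := ind {s | t ∈ s} {s | t ∈ s}
    have e1 : μ.real {ω | t ∈ 𝒮₁ ω} = a₁ := hA₁ t
    have e2 : μ.real {ω | t ∈ 𝒮₂ ω} = a₂ := hA₂ t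
    rw [key _ _ (hmeas₂ t), h2, e1, e2]
  refine ⟨fun t => ?_, fun t t' => ?_⟩
  · rw [← one t, measureReal_def]
    congr 2
    ext ω
    simp
  · have hP : μ.real ({ω | t ∈ 𝒮₁ ω} ∪ {ω | t' ∈ 𝒮₁ ω}) =
        a₁ + a₁ - b₁ (Finset.univ.filter fun i => t i = t' i) := by
      rw [key _ _ (hmeas₁ t'), ← hB₁ t t']
      exact congrArg₂ (fun x y => x + y - _) (hA₁ t) (hA₁ t')
    have hQ : μ.real ({ω | t ∈ 𝒮₂ ω} ∪ {ω | t' ∈ 𝒮₂ ω}) =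
        a₂ + a₂ - b₂ (Finset.univ.filter fun i => t i = t' i) := by
      rw [key _ _ (hmeas₂ t'), ← hB₂ t t']
      exact congrArg₂ (fun x y => x + y - _) (hA₂ t) (hA₂ t')
    have hPQ : μ.real (({ω | t ∈ 𝒮₁ ω} ∪ {ω | t' ∈ 𝒮₁ ω}) ∩
          ({ω | t ∈ 𝒮₂ ω} ∪ {ω | t' ∈ 𝒮₂ ω}))
        = μ.real ({ω | t ∈ 𝒮₁ ω} ∪ {ω | t' ∈ 𝒮₁ ω}) *
          μ.real ({ω | t ∈ 𝒮₂ ω} ∪ {ω | t' ∈ 𝒮₂ ω}) :=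
      ind ({s | t ∈ s} ∪ {s | t' ∈ s}) ({s | t ∈ s} ∪ {s | t' ∈ s})
    have hU := key ({ω | t ∈ 𝒮₁ ω} ∪ {ω | t' ∈ 𝒮₁ ω}) _ ((hmeas₂ t).union (hmeas₂ t'))
    have hV := key ({ω | t ∈ 𝒮₁ ω} ∪ {ω | t ∈ 𝒮₂ ω}) _ ((hmeas₁ t').union (hmeas₂ t'))
    rw [Set.union_union_union_comm, hU, hPQ, hP, hQ, one, one] at hV
    have hE : {ω | t ∈ 𝒮₁ ω ∪ 𝒮₂ ω ∧ t' ∈ 𝒮₁ ω ∪ 𝒮₂ ω} =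
        ({ω | t ∈ 𝒮₁ ω} ∪ {ω | t ∈ 𝒮₂ ω}) ∩ ({ω | t' ∈ 𝒮₁ ω} ∪ {ω | t' ∈ 𝒮₂ ω}) := by
      ext ω
      simp
    rw [hE, ← measureReal_def]
    linarith
end

section
/- Let 𝒮₁ and 𝒮₂ be GUS samples of the same finite product R = Π_{i ∈ ι} R_i with parameters (a₁, b¹) and (a₂, b²), defined on a common probability space and independent of each other. Then the intersection 𝒮₁ ∩ 𝒮₂ (the compaction of the two GUS methods, i.e. applying one GUS method to the output of the other) is a GUS sample of R with parameters a = a₁·a₂ and b(T) = b¹(T)·b²(T) for every T ⊆ ι. -/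
open MeasureTheory Finset

/-- GUS Compaction. The intersection of two independent GUS samples of the
same product relation, with parameters `(a₁, b₁)` and `(a₂, b₂)`, is a GUS sample with
`a = a₁·a₂` and `b T = b₁ T · b₂ T`. -/
theorem gus_compaction
    {ι : Type*} [Fintype ι] [DecidableEq ι]
    {R : ι → Type*} [∀ i, Fintype (R i)] [∀ i, Nonempty (R i)] [∀ i, DecidableEq (R i)]
    {Ω : Type*} [MeasurableSpace Ω] (μ : Measure Ω) [IsProbabilityMeasure μ]
    (𝒮₁ 𝒮₂ : Ω → Finset (∀ i, R i))
    (hmeas₁ : ∀ t, MeasurableSet {ω | t ∈ 𝒮₁ ω})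
    (hmeas₂ : ∀ t, MeasurableSet {ω | t ∈ 𝒮₂ ω})
    (a₁ a₂ : ℝ) (b₁ b₂ : Finset ι → ℝ)
    (hA₁ : ∀ t, (μ {ω | t ∈ 𝒮₁ ω}).toReal = a₁)
    (hB₁ : ∀ t t', (μ {ω | t ∈ 𝒮₁ ω ∧ t' ∈ 𝒮₁ ω}).toReal =
      b₁ (Finset.univ.filter fun i => t i = t' i))
    (hA₂ : ∀ t, (μ {ω | t ∈ 𝒮₂ ω}).toReal = a₂)
    (hB₂ : ∀ t t', (μ {ω | t ∈ 𝒮₂ ω ∧ t' ∈ 𝒮₂ ω}).toReal =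
      b₂ (Finset.univ.filter fun i => t i = t' i))
    (hindep : ∀ (E F : Set (Finset (∀ i, R i))),
      μ (𝒮₁ ⁻¹' E ∩ 𝒮₂ ⁻¹' F) = μ (𝒮₁ ⁻¹' E) * μ (𝒮₂ ⁻¹' F)) :
    (∀ t, (μ {ω | t ∈ 𝒮₁ ω ∩ 𝒮₂ ω}).toReal = a₁ * a₂) ∧
    (∀ t t', (μ {ω | t ∈ 𝒮₁ ω ∩ 𝒮₂ ω ∧ t' ∈ 𝒮₁ ω ∩ 𝒮₂ ω}).toReal =
      b₁ (Finset.univ.filter fun i => t i = t' i) *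
        b₂ (Finset.univ.filter fun i => t i = t' i)) := by
  constructor
  · intro t
    have h := hindep {s | t ∈ s} {s | t ∈ s}
    have e : {ω | t ∈ 𝒮₁ ω ∩ 𝒮₂ ω} = 𝒮₁ ⁻¹' {s | t ∈ s} ∩ 𝒮₂ ⁻¹' {s | t ∈ s} := by
      ext ω
      simp
    rw [e, h, ENNReal.toReal_mul, ← hA₁ t, ← hA₂ t]
    rfl
  · intro t t'
    have h := hindep {s | t ∈ s ∧ t' ∈ s} {s | t ∈ s ∧ t' ∈ s}
    have e : {ω | t ∈ 𝒮₁ ω ∩ 𝒮₂ ω ∧ t' ∈ 𝒮₁ ω ∩ 𝒮₂ ω} =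
        𝒮₁ ⁻¹' {s | t ∈ s ∧ t' ∈ s} ∩ 𝒮₂ ⁻¹' {s | t ∈ s ∧ t' ∈ s} := by
      ext ω
      simp only [Set.mem_setOf_eq, Finset.mem_inter, Set.mem_inter_iff, Set.mem_preimage]
      tauto
    rw [e, h, ENNReal.toReal_mul, ← hB₁ t t', ← hB₂ t t']
    rfl
end

section
/- Let ι₁, ι₂ be disjoint finite index types (formally, work with the sum type ι₁ ⊕ ι₂), let R₁ = Π_{i ∈ ι₁} A_i and R₂ = Π_{j ∈ ι₂} B_j be finite products of finite nonempty types, and let 𝒮₁ and 𝒮₂ be GUS samples of R₁ and R₂ with parameters (a₁, b¹) and (a₂, b²), defined on a common probability space and independent of each other. Then the composition, i.e. the random subset 𝒮 = {t ∈ R₁ × R₂ : π₁(t) ∈ 𝒮₁ and π₂(t) ∈ 𝒮₂}, is a GUS sample of R₁ × R₂ (with lineage indexed by ι₁ ⊕ ι₂) with parameters a = a₁·a₂ and b(T) = b¹(T ∩ ι₁) · b²(T ∩ ι₂) for every T ⊆ ι₁ ⊕ ι₂. -/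
open MeasureTheory Finset

/-- GUS Composition. If `𝒮₁`, `𝒮₂` are independent GUS samples of
`R₁ = Π_{i ∈ ι₁} A i` and `R₂ = Π_{j ∈ ι₂} B j` with parameters `(a₁, b₁)`, `(a₂, b₂)`,
then `𝒮 = {t ∈ R₁ × R₂ : t.1 ∈ 𝒮₁ ∧ t.2 ∈ 𝒮₂}` is a GUS sample of `R₁ × R₂`, with
lineage indexed by `ι₁ ⊕ ι₂`, with parameters `a = a₁·a₂` and
`b T = b₁ (T ∩ ι₁) · b₂ (T ∩ ι₂)`; the agreement set of two pairs is the union inside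
`ι₁ ⊕ ι₂` of the agreement sets of the components. -/
theorem gus_composition
    {ι₁ ι₂ : Type*} [Fintype ι₁] [Fintype ι₂] [DecidableEq ι₁] [DecidableEq ι₂]
    {A : ι₁ → Type*} [∀ i, Fintype (A i)] [∀ i, Nonempty (A i)] [∀ i, DecidableEq (A i)]
    {B : ι₂ → Type*} [∀ j, Fintype (B j)] [∀ j, Nonempty (B j)] [∀ j, DecidableEq (B j)]
    {Ω : Type*} [MeasurableSpace Ω] (μ : Measure Ω) [IsProbabilityMeasure μ]
    (𝒮₁ : Ω → Finset (∀ i, A i)) (𝒮₂ : Ω → Finset (∀ j, B j))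
    (hmeas₁ : ∀ t, MeasurableSet {ω | t ∈ 𝒮₁ ω})
    (hmeas₂ : ∀ u, MeasurableSet {ω | u ∈ 𝒮₂ ω})
    (a₁ a₂ : ℝ) (b₁ : Finset ι₁ → ℝ) (b₂ : Finset ι₂ → ℝ)
    (hA₁ : ∀ t, (μ {ω | t ∈ 𝒮₁ ω}).toReal = a₁)
    (hB₁ : ∀ t t', (μ {ω | t ∈ 𝒮₁ ω ∧ t' ∈ 𝒮₁ ω}).toReal =
      b₁ (Finset.univ.filter fun i => t i = t' i))
    (hA₂ : ∀ u, (μ {ω | u ∈ 𝒮₂ ω}).toReal = a₂)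
    (hB₂ : ∀ u u', (μ {ω | u ∈ 𝒮₂ ω ∧ u' ∈ 𝒮₂ ω}).toReal =
      b₂ (Finset.univ.filter fun j => u j = u' j))
    (hindep : ∀ (E : Set (Finset (∀ i, A i))) (F : Set (Finset (∀ j, B j))),
      μ (𝒮₁ ⁻¹' E ∩ 𝒮₂ ⁻¹' F) = μ (𝒮₁ ⁻¹' E) * μ (𝒮₂ ⁻¹' F))
    -- the combined pairwise-inclusion parameter `b` on lineage `ι₁ ⊕ ι₂`
    (b : Finset (ι₁ ⊕ ι₂) → ℝ)
    (hb : ∀ T : Finset (ι₁ ⊕ ι₂),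
      b T = b₁ (T.preimage Sum.inl Sum.inl_injective.injOn) *
        b₂ (T.preimage Sum.inr Sum.inr_injective.injOn))
    -- the agreement set of two pairs, inside `ι₁ ⊕ ι₂`
    (agree : ((∀ i, A i) × (∀ j, B j)) → ((∀ i, A i) × (∀ j, B j)) → Finset (ι₁ ⊕ ι₂))
    (hagree : ∀ t t', agree t t' =
      (Finset.univ.filter fun i => t.1 i = t'.1 i).map Function.Embedding.inl ∪
        (Finset.univ.filter fun j => t.2 j = t'.2 j).map Function.Embedding.inr) :
    (∀ t : (∀ i, A i) × (∀ j, B j),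
      (μ {ω | t.1 ∈ 𝒮₁ ω ∧ t.2 ∈ 𝒮₂ ω}).toReal = a₁ * a₂) ∧
    (∀ t t' : (∀ i, A i) × (∀ j, B j),
      (μ {ω | (t.1 ∈ 𝒮₁ ω ∧ t.2 ∈ 𝒮₂ ω) ∧ (t'.1 ∈ 𝒮₁ ω ∧ t'.2 ∈ 𝒮₂ ω)}).toReal =
        b (agree t t')) := by
  refine ⟨fun t => ?_, fun t t' => ?_⟩
  · have h := hindep {s | t.1 ∈ s} {s | t.2 ∈ s}
    have h2 := congrArg ENNReal.toReal h
    rw [ENNReal.toReal_mul] at h2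
    rw [← hA₁ t.1, ← hA₂ t.2]
    exact h2
  · have h := hindep {s | t.1 ∈ s ∧ t'.1 ∈ s} {s | t.2 ∈ s ∧ t'.2 ∈ s}
    have h2 := congrArg ENNReal.toReal h
    rw [ENNReal.toReal_mul] at h2
    have e1 : (agree t t').preimage Sum.inl Sum.inl_injective.injOn =
        Finset.univ.filter fun i => t.1 i = t'.1 i := by
      ext i
      simp [hagree]
    have e2 : (agree t t').preimage Sum.inr Sum.inr_injective.injOn =
        Finset.univ.filter fun j => t.2 j = t'.2 j := by
      ext j
      simp [hagree]
    rw [hb, e1, e2, ← hB₁, ← hB₂]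
    refine Eq.trans ?_ h2
    congr 2
    ext ω
    simp only [Set.mem_setOf_eq, Set.mem_inter_iff, Set.mem_preimage]
    tauto
end

section
/- Let 𝒮 be a GUS sample of R = Π_{i ∈ ι} R_i with parameters a and b, and let f : R → ℝ. For S ⊆ ι define the deterministic quantity y_S = Σ_{u ∈ Π_{i ∈ S} R_i} ( Σ_{v ∈ Π_{i ∈ ι∖S} R_i} f(u ⊎ v) )² and the random variable Y_S = Σ_{u ∈ Π_{i ∈ S} R_i} ( Σ_{v : u ⊎ v ∈ 𝒮} f(u ⊎ v) )², where u ⊎ v denotes the tuple in R whose i-th coordinate is u_i for i ∈ S and v_i for i ∉ S. Then E[Y_S] = Σ_{T ⊆ ι∖S} d_{S,T} · y_{S∪T}, where d_{S,T} = Σ_{U ⊆ T} (−1)^{|T|−|U|} b(S ∪ U). -/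
open MeasureTheory Finset

lemma mergeTuple_eq_iff {ι : Type*} [Fintype ι] [DecidableEq ι] {R : ι → Type*}
    (S : Finset ι) (u u' : ∀ i : {x // x ∈ S}, R i.1) (v v' : ∀ i : {x // x ∈ Sᶜ}, R i.1) :
    (∀ i ∈ S, mergeTuple S u v i = mergeTuple S u' v' i) ↔ u = u' := by
  constructor
  · intro h
    funext ⟨i, hi⟩
    have := h i hi
    simpa [mergeTuple, hi] using this
  · rintro rfl i hi
    simp [mergeTuple, hi]

/-- merging as an equivalence -/
def mergeEquiv {ι : Type*} [Fintype ι] [DecidableEq ι] {R : ι → Type*} (S : Finset ι) :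
    ((∀ i : {x // x ∈ S}, R i.1) × (∀ i : {x // x ∈ Sᶜ}, R i.1)) ≃ (∀ i, R i) where
  toFun p := mergeTuple S p.1 p.2
  invFun t := (fun i => t i.1, fun i => t i.1)
  left_inv := by
    rintro ⟨u, v⟩
    refine Prod.ext ?_ ?_
    · funext ⟨i, hi⟩
      simp [mergeTuple, hi]
    · funext ⟨i, hi⟩
      have := Finset.mem_compl.mp hi
      simp [mergeTuple, this]
  right_inv := by
    intro t
    funext i
    simp [mergeTuple]

lemma sum_merge_sq {ι : Type*} [Fintype ι] [DecidableEq ι]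
    {R : ι → Type*} [∀ i, Fintype (R i)] [∀ i, DecidableEq (R i)]
    (S : Finset ι) (g : (∀ i, R i) → ℝ) :
    ∑ u : ∀ i : {x // x ∈ S}, R i.1,
      (∑ v : ∀ i : {x // x ∈ Sᶜ}, R i.1, g (mergeTuple S u v)) ^ 2 =
    ∑ t, ∑ t', if S ⊆ (Finset.univ.filter fun i => t i = t' i) then g t * g t' else 0 := by
  classical
  rw [← (mergeEquiv S).sum_comp, Fintype.sum_prod_type]
  refine Finset.sum_congr rfl fun u _ => ?_
  rw [sq, Finset.sum_mul_sum]
  refine Finset.sum_congr rfl fun v _ => ?_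
  rw [← (mergeEquiv S).sum_comp, Fintype.sum_prod_type]
  have key : ∀ u' v', (S ⊆ (Finset.univ.filter fun i =>
      mergeEquiv S (u, v) i = mergeEquiv (R := R) S (u', v') i)) ↔ u = u' := by
    intro u' v'
    rw [← mergeTuple_eq_iff S u u' v v']
    constructor
    · intro h i hi
      exact (Finset.mem_filter.mp (h hi)).2
    · intro h i hi
      exact Finset.mem_filter.mpr ⟨Finset.mem_univ _, h i hi⟩
  simp only [key]
  rw [Finset.sum_eq_single u]
  · simp [mergeEquiv]
  · intro u' _ h
    simp [h.symm]
  · simp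

lemma moebius_powerset {ι : Type*} [DecidableEq ι] (W : Finset ι) :
    ∀ h : Finset ι → ℝ,
    ∑ T ∈ W.powerset, ∑ U ∈ T.powerset, (-1 : ℝ) ^ (T.card - U.card) * h U = h W := by
  induction W using Finset.induction_on with
  | empty => intro h; simp
  | insert x W hx ih =>
    intro h
    rw [Finset.sum_powerset_insert hx, ← ih fun U => h (insert x U), ← Finset.sum_add_distrib]
    refine Finset.sum_congr rfl fun T hT => ?_
    have hxT : x ∉ T := fun hh => hx (Finset.mem_powerset.mp hT hh)
    rw [Finset.sum_powerset_insert hxT, ← add_assoc, ← Finset.sum_add_distrib,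
      Finset.sum_eq_zero, zero_add]
    · refine Finset.sum_congr rfl fun U hU => ?_
      have hxU : x ∉ U := fun hh => hxT (Finset.mem_powerset.mp hU hh)
      rw [Finset.card_insert_of_notMem hxT, Finset.card_insert_of_notMem hxU,
        Nat.add_sub_add_right]
    · intro U hU
      have := Finset.card_le_card (Finset.mem_powerset.mp hU)
      rw [Finset.card_insert_of_notMem hxT, Nat.sub_add_comm this, pow_succ]
      ring

lemma moebius_inner {ι : Type*} [Fintype ι] [DecidableEq ι] (S A : Finset ι)
    (b : Finset ι → ℝ) (c : ℝ) :
    ∑ T ∈ Sᶜ.powerset, (∑ U ∈ T.powerset, (-1 : ℝ) ^ (T.card - U.card) * b (S ∪ U)) *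
      (if S ∪ T ⊆ A then c else 0) = if S ⊆ A then b A * c else 0 := by
  split_ifs with hS
  · have h := moebius_powerset (A \ S) fun U => b (S ∪ U)
    rw [Finset.union_sdiff_of_subset hS] at h
    rw [← h, Finset.sum_mul]
    symm
    refine Finset.sum_subset_zero_on_sdiff ?_ ?_ ?_
    · intro T hT
      simp only [Finset.mem_powerset] at *
      intro i hi
      have := hT hi
      simp at this
      simp [this.2]
    · intro T hT
      rw [if_neg, mul_zero]
      intro hST
      simp only [Finset.mem_sdiff, Finset.mem_powerset] at hT
      apply hT.2
      intro i hi
      exact Finset.mem_sdiff.mpr ⟨hST (Finset.mem_union_right _ hi),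
        Finset.mem_compl.mp (hT.1 hi)⟩
    · intro T hT
      rw [if_pos]
      exact Finset.union_subset hS
        ((Finset.mem_powerset.mp hT).trans Finset.sdiff_subset)
  · refine Finset.sum_eq_zero fun T _ => ?_
    rw [if_neg, mul_zero]
    exact fun h => hS (Finset.subset_union_left.trans h)

/-- Expected value of the sample-based group-by quantities `Y_S`:
for a GUS sample `𝒮` with parameters `(a, b)`,
`E[Y_S] = ∑_{T ⊆ Sᶜ} d_{S,T} · y_{S ∪ T}` where
`d_{S,T} = ∑_{U ⊆ T} (−1)^{|T|−|U|} b (S ∪ U)`. -/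
theorem gus_yS_expectation
    {ι : Type*} [Fintype ι] [DecidableEq ι]
    {R : ι → Type*} [∀ i, Fintype (R i)] [∀ i, Nonempty (R i)] [∀ i, DecidableEq (R i)]
    {Ω : Type*} [MeasurableSpace Ω] (μ : Measure Ω) [IsProbabilityMeasure μ]
    (𝒮 : Ω → Finset (∀ i, R i)) (hmeas : ∀ t, MeasurableSet {ω | t ∈ 𝒮 ω})
    (a : ℝ) (b : Finset ι → ℝ)
    (hA : ∀ t, (μ {ω | t ∈ 𝒮 ω}).toReal = a)
    (hB : ∀ t t', (μ {ω | t ∈ 𝒮 ω ∧ t' ∈ 𝒮 ω}).toReal =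
      b (Finset.univ.filter fun i => t i = t' i))
    (f : (∀ i, R i) → ℝ) (S : Finset ι) :
    ∫ ω, (∑ u : ∀ i : {x // x ∈ S}, R i.1,
        (∑ v : ∀ i : {x // x ∈ Sᶜ}, R i.1,
          if mergeTuple S u v ∈ 𝒮 ω then f (mergeTuple S u v) else 0) ^ 2) ∂μ =
      ∑ T ∈ Sᶜ.powerset,
        (∑ U ∈ T.powerset, (-1 : ℝ) ^ (T.card - U.card) * b (S ∪ U)) *
          (∑ u : ∀ i : {x // x ∈ S ∪ T}, R i.1,
            (∑ v : ∀ i : {x // x ∈ (S ∪ T)ᶜ}, R i.1, f (mergeTuple (S ∪ T) u v)) ^ 2) := by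
  simp only [fun ω => sum_merge_sq S fun t => if t ∈ 𝒮 ω then f t else 0,
    fun T => sum_merge_sq (S ∪ T) f]
  have hterm : ∀ t t' : (∀ i, R i), (fun ω =>
      (if S ⊆ (Finset.univ.filter fun i => t i = t' i) then
        (if t ∈ 𝒮 ω then f t else 0) * (if t' ∈ 𝒮 ω then f t' else 0) else 0)) =
      Set.indicator {ω | t ∈ 𝒮 ω ∧ t' ∈ 𝒮 ω} (fun _ =>
        if S ⊆ (Finset.univ.filter fun i => t i = t' i) then f t * f t' else 0) := by
    intro t t'
    funext ω
    by_cases h1 : t ∈ 𝒮 ω <;> by_cases h2 : t' ∈ 𝒮 ω <;> simp [Set.indicator, h1, h2]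
  have hm : ∀ t t' : (∀ i, R i), MeasurableSet {ω | t ∈ 𝒮 ω ∧ t' ∈ 𝒮 ω} :=
    fun t t' => (hmeas t).inter (hmeas t')
  have hint : ∀ t t' : (∀ i, R i), Integrable (fun ω =>
      (if S ⊆ (Finset.univ.filter fun i => t i = t' i) then
        (if t ∈ 𝒮 ω then f t else 0) * (if t' ∈ 𝒮 ω then f t' else 0) else 0)) μ := by
    intro t t'
    rw [hterm]
    exact (integrable_const _).indicator (hm t t')
  rw [integral_finsetSum _ fun t _ => integrable_finsetSum _ fun t' _ => hint t t']
  simp only [Finset.mul_sum]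
  rw [Finset.sum_comm]
  refine Finset.sum_congr rfl fun t _ => ?_
  rw [integral_finsetSum _ fun t' _ => hint t t', Finset.sum_comm]
  refine Finset.sum_congr rfl fun t' _ => ?_
  rw [hterm, integral_indicator_const _ (hm t t'), moebius_inner, Measure.real, hB, smul_eq_mul,
    mul_ite, mul_zero]
end
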